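/- Let φ = (√5 − 1)/2, Φ = (√5 + 1)/2, and for an integer n ≥ 1 let FR_n = (Φ^{n+1} − φ^{n+1})/(√5·(Φ^n − φ^n)). Then for every real α with 0 < α < 1/√5 and every integer n ≥ 1, d_n(α) ≥ FR_n · d_{n−1}(α). -/

import Mathlib

/-- `dpoly n α = ∑_{m=0}^{⌊n/2⌋} (-1)^m C(n-m, m) α^(2m)`. -/
noncomputable def dpoly (n : ℕ) (α : ℝ) : ℝ :=
  ∑ m ∈ Finset.range (n / 2 + 1), (-1 : ℝ) ^ m * (Nat.choose (n - m) m : ℝ) * α ^ (2 * m)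

/-- `φ = (√5 - 1)/2`. -/
noncomputable def phi : ℝ := (Real.sqrt 5 - 1) / 2

/-- `Φ = (√5 + 1)/2`. -/
noncomputable def Phi : ℝ := (Real.sqrt 5 + 1) / 2

/-- `FR n = (Φ^(n+1) - φ^(n+1)) / (√5 (Φ^n - φ^n))`. -/
noncomputable def FR (n : ℕ) : ℝ :=
  (Phi ^ (n + 1) - phi ^ (n + 1)) / (Real.sqrt 5 * (Phi ^ n - phi ^ n))

theorem dpoly_ext (n N : ℕ) (h : n / 2 + 1 ≤ N) (α : ℝ) :
    dpoly n α = ∑ m ∈ Finset.range N, (-1 : ℝ) ^ m * (Nat.choose (n - m) m : ℝ) * α ^ (2 * m) := by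
  unfold dpoly
  apply Finset.sum_subset
  · intro x hx
    simp only [Finset.mem_range] at *
    omega
  · intro x _ hx
    simp only [Finset.mem_range] at hx
    rw [Nat.choose_eq_zero_of_lt (by omega)]
    simp

theorem dpoly_rec (n : ℕ) (α : ℝ) : dpoly (n + 2) α = dpoly (n + 1) α - α ^ 2 * dpoly n α := by
  rw [dpoly_ext (n + 2) (n + 2) (by omega), dpoly_ext (n + 1) (n + 2) (by omega),
    dpoly_ext n (n + 1) (by omega), Finset.sum_range_succ', Finset.sum_range_succ' _ (n + 1),
    Finset.mul_sum, add_sub_right_comm, ← Finset.sum_sub_distrib]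
  congr 1
  · apply Finset.sum_congr rfl
    intro m hm
    simp only [Finset.mem_range] at hm
    have h1 : n + 2 - (m + 1) = (n - m) + 1 := by omega
    have h2 : n + 1 - (m + 1) = n - m := by omega
    rw [h1, h2, Nat.choose_succ_succ]
    push_cast
    ring

theorem g_rec (n : ℕ) : Phi ^ (n + 2) - phi ^ (n + 2)
    = √5 * (Phi ^ (n + 1) - phi ^ (n + 1)) - (Phi ^ n - phi ^ n) := by
  have h5 : √5 ^ 2 = (5 : ℝ) := Real.sq_sqrt (by norm_num)
  have hP : Phi ^ 2 = √5 * Phi - 1 := by unfold Phi; nlinarith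
  have hp : phi ^ 2 = √5 * phi - 1 := by unfold phi; nlinarith
  rw [pow_add, pow_add phi n 2, hP, hp]
  ring

theorem g_pos (n : ℕ) : 0 < Phi ^ (n + 1) - phi ^ (n + 1) := by
  have h5 : (1 : ℝ) ≤ √5 := Real.one_le_sqrt.mpr (by norm_num)
  apply sub_pos.mpr
  apply pow_lt_pow_left₀
  · unfold Phi phi; linarith
  · unfold phi; linarith
  · omega

theorem main_aux (α : ℝ) (hα : α ^ 2 ≤ 1 / 5) (n : ℕ) : 0 < dpoly n α ∧
    (Phi ^ (n + 2) - phi ^ (n + 2)) * dpoly n α ≤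
      √5 * (Phi ^ (n + 1) - phi ^ (n + 1)) * dpoly (n + 1) α := by
  have h5 : √5 ^ 2 = (5 : ℝ) := Real.sq_sqrt (by norm_num)
  have h5p : 0 < √5 := by positivity
  induction n with
  | zero =>
    have h0 : dpoly 0 α = 1 := by simp [dpoly]
    have h1 : dpoly 1 α = 1 := by simp [dpoly]
    rw [g_rec, zero_add, h0, h1]
    simp
  | succ n ih =>
    obtain ⟨hd, ih⟩ := ih
    have g1 := g_pos n
    have g2 := g_pos (n + 1)
    have hpos : 0 < dpoly (n + 1) α := by
      have := lt_of_lt_of_le (mul_pos g2 hd) ih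
      exact pos_of_mul_pos_right this (by positivity)
    refine ⟨hpos, ?_⟩
    rw [dpoly_rec, g_rec (n + 1)]
    simp only [add_assoc, Nat.reduceAdd] at *
    have h := mul_le_mul_of_nonneg_right hα (mul_pos g2 hd).le
    have h2 := mul_le_mul_of_nonneg_left (h.trans (mul_le_mul_of_nonneg_left ih (by norm_num))) h5p.le
    have h3 : √5 * (1 / 5 * (√5 * (Phi ^ (n + 1) - phi ^ (n + 1)) * dpoly (n + 1) α))
      = (Phi ^ (n + 1) - phi ^ (n + 1)) * dpoly (n + 1) α := by
      linear_combination (1 / 5 * (Phi ^ (n + 1) - phi ^ (n + 1)) * dpoly (n + 1) α) * h5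
    rw [h3] at h2
    linarith

theorem stmt11 (α : ℝ) (hα0 : 0 < α) (hα1 : α < 1 / Real.sqrt 5) (n : ℕ) (hn : 1 ≤ n) :
    dpoly n α ≥ FR n * dpoly (n - 1) α := by
  obtain ⟨k, rfl⟩ : ∃ k, n = k + 1 := ⟨n - 1, by omega⟩
  have h5 : √5 ^ 2 = (5 : ℝ) := Real.sq_sqrt (by norm_num)
  have h5p : 0 < √5 := by positivity
  have hα : α ^ 2 ≤ 1 / 5 := by
    have h := pow_le_pow_left₀ hα0.le hα1.le 2
    rwa [div_pow, h5, one_pow] at h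
  have h := (main_aux α hα k).2
  have g := g_pos k
  rw [Nat.add_sub_cancel, ge_iff_le, FR, div_mul_eq_mul_div, div_le_iff₀ (by positivity)]
  linarith
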